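/- Let Ŝ be a Neumann subgroup of M̂ = PGL(2,ℤ), and let ι : ℤ → ℤ and δ : ℤ → {1,−1} be the unique functions satisfying Ŝ τ^n ω = Ŝ τ^{ι(n)} ν^{(1−δ(n))/2} for all n ∈ ℤ. Then ι is an involution of ℤ (ι(ι(n)) = n for all n) and δ(ι(n)) = δ(n) for all n ∈ ℤ. -/

import Mathlib

open Matrix Pointwise

noncomputable section

abbrev GL2Z := Matrix.GeneralLinearGroup (Fin 2) ℤ

/-- The subgroup {±I} of GL(2,ℤ), which is its center. -/
def pmI : Subgroup GL2Z := Subgroup.zpowers (-1)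

instance pmI_normal : pmI.Normal := by
  constructor
  rintro n hn g
  obtain ⟨k, hk⟩ := Subgroup.mem_zpowers_iff.mp hn
  have hc : Commute ((-1 : GL2Z) ^ k) g := (Commute.neg_one_left g).zpow_left k
  have : g * n * g⁻¹ = n := by
    rw [← hk, ← hc.eq]; group
  rw [this]; exact hn

/-- The extended modular group PGL(2,ℤ) = GL(2,ℤ)/{±I}. -/
abbrev Mhat := GL2Z ⧸ pmI

def pr : GL2Z →* Mhat := QuotientGroup.mk' pmI

def tauGL : GL2Z := ⟨!![1,1;0,1], !![1,-1;0,1], by decide, by decide⟩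
def nuGL : GL2Z := ⟨!![-1,0;0,1], !![-1,0;0,1], by decide, by decide⟩
def omegaGL : GL2Z := ⟨!![0,-1;1,0], !![0,1;-1,0], by decide, by decide⟩
def phiGL : GL2Z := ⟨!![0,-1;1,1], !![1,1;-1,0], by decide, by decide⟩

/-- τ, the class of [[1,1],[0,1]]. -/
def tau : Mhat := pr tauGL
/-- ν, the class of [[-1,0],[0,1]]. -/
def nu : Mhat := pr nuGL
/-- ω, the class of [[0,-1],[1,0]]. -/
def omega : Mhat := pr omegaGL
/-- φ, the class of [[0,-1],[1,1]]. -/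
def phi : Mhat := pr phiGL

/-- T̂ = ⟨τ, ν⟩, the stabilizer of ∞. -/
def That : Subgroup Mhat := Subgroup.closure {tau, nu}

/-- A Neumann subgroup of the extended modular group: a complement of T̂. -/
def IsNeumann (S : Subgroup Mhat) : Prop :=
  (S : Set Mhat) * (That : Set Mhat) = Set.univ ∧ S ⊓ That = ⊥

/-- The modular group PSL(2,ℤ), as the subgroup of PGL(2,ℤ) of classes of
matrices of determinant one. -/
def Msub : Subgroup Mhat :=
  Subgroup.map pr (MonoidHom.ker (Matrix.GeneralLinearGroup.det))

theorem mem_pmI_cases {g : GL2Z} (h : g ∈ pmI) : g = 1 ∨ g = -1 := by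
  obtain ⟨k, hk⟩ := Subgroup.mem_zpowers_iff.mp h
  subst hk
  rcases Int.even_or_odd k with h | h
  · left; exact h.neg_one_zpow
  · right; exact h.neg_one_zpow

theorem pr_eq_one {g : GL2Z} (h : pr g = 1) : g = 1 ∨ g = -1 :=
  mem_pmI_cases ((QuotientGroup.eq_one_iff g).mp h)

theorem tau_coe_nat (k : ℕ) : ((tauGL ^ k : GL2Z) : Matrix (Fin 2) (Fin 2) ℤ) = !![1, (k:ℤ); 0, 1] := by
  induction k with
  | zero => simp [Matrix.one_fin_two]
  | succ k ih =>
    rw [pow_succ, Units.val_mul, ih]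
    simp [tauGL, Matrix.mul_fin_two, add_comm]

theorem tau_nat {k : ℕ} (h : tau ^ k = 1) : k = 0 := by
  have h' : pr (tauGL ^ k) = 1 := by rw [map_pow]; exact h
  rcases pr_eq_one h' with h | h
  · have := congrArg (fun g : GL2Z => (g : Matrix (Fin 2) (Fin 2) ℤ) 0 1) h
    simpa [tau_coe_nat, -Units.val_pow_eq_pow_val] using this
  · have := congrArg (fun g : GL2Z => (g : Matrix (Fin 2) (Fin 2) ℤ) 0 1) h
    simpa [tau_coe_nat, -Units.val_pow_eq_pow_val] using this

theorem tau_int {k : ℤ} (h : tau ^ k = 1) : k = 0 := by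
  obtain ⟨m, rfl | rfl⟩ := k.eq_nat_or_neg
  · rw [zpow_natCast] at h
    simpa using tau_nat h
  · rw [_root_.zpow_neg, inv_eq_one, zpow_natCast] at h
    simpa using tau_nat h

theorem tau_ne_nu_nat {k : ℕ} (h : tau ^ k = nu) : False := by
  have h' : pr (tauGL ^ k * nuGL⁻¹) = 1 := by
    rw [map_mul, map_pow, map_inv, mul_inv_eq_one]; exact h
  rcases pr_eq_one h' with h | h
  · have := congrArg (fun g : GL2Z => (g : Matrix (Fin 2) (Fin 2) ℤ) 0 0) (mul_inv_eq_iff_eq_mul.mp h)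
    simp [tau_coe_nat, nuGL, -Units.val_pow_eq_pow_val] at this
  · have := congrArg (fun g : GL2Z => (g : Matrix (Fin 2) (Fin 2) ℤ) 1 1) (mul_inv_eq_iff_eq_mul.mp h)
    simp [tau_coe_nat, nuGL, -Units.val_pow_eq_pow_val] at this

theorem nu_sq : nu * nu = 1 := by
  have : nuGL * nuGL = 1 := by ext i j; fin_cases i <;> fin_cases j <;> simp [nuGL]
  unfold nu; rw [← map_mul, this, map_one]

theorem nu_inv : nu⁻¹ = nu := inv_eq_of_mul_eq_one_left nu_sq

theorem tau_ne_nu {k : ℤ} (h : tau ^ k = nu) : False := by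
  obtain ⟨m, rfl | rfl⟩ := k.eq_nat_or_neg
  · rw [zpow_natCast] at h
    exact tau_ne_nu_nat h
  · rw [_root_.zpow_neg, inv_eq_iff_eq_inv, zpow_natCast, nu_inv] at h
    exact tau_ne_nu_nat h

theorem pr_neg_one : pr (-1) = 1 :=
  (QuotientGroup.eq_one_iff _).mpr (Subgroup.mem_zpowers _)

theorem omega_sq : omega * omega = 1 := by
  have : omegaGL * omegaGL = -1 := by ext i j; fin_cases i <;> fin_cases j <;> simp [omegaGL]
  unfold omega; rw [← map_mul, this, pr_neg_one]

theorem omega_nu : omega * nu * omega = nu := by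
  have : omegaGL * nuGL * omegaGL = nuGL := by
    ext i j; fin_cases i <;> fin_cases j <;> simp [omegaGL, nuGL]
  unfold omega nu; rw [← map_mul, ← map_mul, this]

theorem tau_mem (k : ℤ) : tau ^ k ∈ That :=
  That.zpow_mem (Subgroup.subset_closure (by simp)) k

theorem nu_mem : nu ∈ That := Subgroup.subset_closure (by simp)

/-- For a Neumann subgroup Ŝ of M̂ = PGL(2,ℤ), the functions
ι : ℤ → ℤ and δ : ℤ → {1,−1} determined by Ŝτⁿω = Ŝτ^{ι(n)}ν^{(1−δ(n))/2}
satisfy: ι is an involution of ℤ and δ∘ι = δ. -/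
theorem neumann_iota_involutive
    (Shat : Subgroup Mhat) (hN : IsNeumann Shat)
    (iota : ℤ → ℤ) (delta : ℤ → ℤ) (hdelta : ∀ n, delta n = 1 ∨ delta n = -1)
    (hcoset : ∀ n : ℤ,
      (tau ^ n * omega) * (tau ^ iota n * nu ^ ((1 - delta n) / 2))⁻¹ ∈ Shat) :
    (∀ n : ℤ, iota (iota n) = n) ∧ (∀ n : ℤ, delta (iota n) = delta n) := by
  have key : ∀ n, iota (iota n) = n ∧ delta (iota n) = delta n := by
    intro n
    have h := Shat.mul_mem (hcoset n) (hcoset (iota n))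
    have triv : ∀ x, x ∈ Shat → x ∈ That → x = 1 := fun x h1 h2 => by
      have : x ∈ Shat ⊓ That := ⟨h1, h2⟩
      rwa [hN.2, Subgroup.mem_bot] at this
    have e1 : ((1 - 1 : ℤ) / 2) = 0 := by norm_num
    have e2 : ((1 - -1 : ℤ) / 2) = 1 := by norm_num
    have even : tau ^ n * (tau ^ iota (iota n))⁻¹ ∈ Shat → iota (iota n) = n := by
      intro h
      have := triv _ h (That.mul_mem (tau_mem _) (That.inv_mem (tau_mem _)))
      rw [← _root_.zpow_neg, ← _root_.zpow_add] at this
      have := tau_int this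
      omega
    have odd : ¬ (tau ^ n * nu * (tau ^ iota (iota n))⁻¹ ∈ Shat) := by
      intro h
      have := triv _ h (That.mul_mem (That.mul_mem (tau_mem _) nu_mem) (That.inv_mem (tau_mem _)))
      rw [mul_inv_eq_one, ← eq_inv_mul_iff_mul_eq, ← _root_.zpow_neg, ← _root_.zpow_add] at this
      exact tau_ne_nu this.symm
    rcases hdelta n with a | a <;> rcases hdelta (iota n) with b | b <;>
      simp only [a, b, e1, e2, zpow_zero, zpow_one, mul_one, _root_.mul_inv_rev, nu_inv] at h ⊢
    · refine ⟨even ?_, trivial⟩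
      convert h using 1
      calc _ = tau ^ n * 1 * (tau ^ iota (iota n))⁻¹ := by group
        _ = _ := by rw [← omega_sq]; group
    · refine (odd ?_).elim
      convert h using 1
      calc _ = tau ^ n * 1 * nu * (tau ^ iota (iota n))⁻¹ := by group
        _ = _ := by rw [← omega_sq]; group
    · refine (odd ?_).elim
      convert h using 1
      calc _ = tau ^ n * (_root_.omega * nu * _root_.omega) * (tau ^ iota (iota n))⁻¹ := by rw [omega_nu]
        _ = _ := by group
    · refine ⟨even ?_, trivial⟩
      convert h using 1
      calc _ = tau ^ n * (nu * nu) * (tau ^ iota (iota n))⁻¹ := by rw [nu_sq]; group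
        _ = tau ^ n * ((_root_.omega * nu * _root_.omega) * nu) * (tau ^ iota (iota n))⁻¹ := by rw [omega_nu]
        _ = _ := by group
  exact ⟨fun n => (key n).1, fun n => (key n).2⟩
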